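/- Every 2K2-free bipartite finite simple graph G on n vertices is recolourable; moreover, for every ℓ ≥ χ(G)+1, any two ℓ-colourings of G are joined in the reconfiguration graph R_ℓ(G) by a path of length at most 4n (so the ℓ-recolouring diameter of G is at most 4n). -/

import Mathlib

/-- A graph is `2K₂`-free if it has no induced subgraph isomorphic to `2K₂`
(two vertex-disjoint edges with no edges between them). -/
def TwoK2Free {V : Type*} (G : SimpleGraph V) : Prop :=
  ¬ ∃ a b c d : V, G.Adj a b ∧ G.Adj c d ∧
      ¬ G.Adj a c ∧ ¬ G.Adj a d ∧ ¬ G.Adj b c ∧ ¬ G.Adj b d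

/-- The reconfiguration graph `R_ℓ(G)` of the `ℓ`-colourings of `G`: vertices are the
proper `ℓ`-colourings of `G`, two colourings being adjacent when they differ in colour
on exactly one vertex. -/
def recolGraph {V : Type*} (G : SimpleGraph V) (ℓ : ℕ) : SimpleGraph (G.Coloring (Fin ℓ)) where
  Adj c₁ c₂ := ∃! v : V, c₁ v ≠ c₂ v
  symm := by
    constructor
    rintro c₁ c₂ ⟨v, hv, hu⟩
    exact ⟨v, hv.symm, fun w hw => hu w hw.symm⟩
  loopless := by
    constructor
    rintro c ⟨v, hv, -⟩
    exact hv rfl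


/-- Two colourings such that every edge has an endpoint on which they agree are joined by a walk
whose length is the number of vertices on which they differ. -/
theorem walk_of_diff {V : Type*} [Fintype V] [DecidableEq V] (G : SimpleGraph V) (ℓ : ℕ) (n : ℕ) :
    ∀ c c' : G.Coloring (Fin ℓ), (Finset.univ.filter fun v => c v ≠ c' v).card = n →
      (∀ u v, G.Adj u v → c u = c' u ∨ c v = c' v) →
      ∃ p : (recolGraph G ℓ).Walk c c', p.length = n := by
  induction n with
  | zero =>
    intro c c' h _
    have : c = c' := by
      ext v : 1
      by_contra hv
      rw [Finset.card_eq_zero] at h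
      have : v ∈ (Finset.univ.filter fun v => c v ≠ c' v) := by simpa using hv
      rw [h] at this
      simp at this
    subst this
    exact ⟨.nil, rfl⟩
  | succ n ih =>
    intro c c' h hi
    obtain ⟨v, hv⟩ : (Finset.univ.filter fun v => c v ≠ c' v).Nonempty := by
      rw [← Finset.card_pos]; omega
    have hv' : c v ≠ c' v := by simpa using hv
    let d : G.Coloring (Fin ℓ) := SimpleGraph.Coloring.mk (fun w => if w = v then c' v else c w) (by
      intro a b hab
      have h1 := c.valid hab
      have h2 := c'.valid hab
      have h3 := hi a b hab
      have h4 := hab.ne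
      by_cases ha : a = v <;> by_cases hb : b = v <;> simp only [ha, hb, if_true, if_false] <;> grind)
    have hd : ∀ w, d w = if w = v then c' v else c w := fun w => rfl
    have hadj : (recolGraph G ℓ).Adj c d := by
      refine ⟨v, ?_, ?_⟩
      · simpa [hd] using hv'
      · intro w hw
        by_contra hne
        simp [hd, hne] at hw
    have hS : (Finset.univ.filter fun w => d w ≠ c' w)
        = (Finset.univ.filter fun w => c w ≠ c' w).erase v := by
      ext w
      by_cases hw : w = v
      · subst hw; simp [hd]
      · simp [hd, hw]
    obtain ⟨p, hp⟩ := ih d c' (by rw [hS, Finset.card_erase_of_mem hv, h]; rfl) (by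
      intro a b hab
      have := hi a b hab
      rw [hd, hd]
      grind)
    exact ⟨.cons hadj p, by simp [hp]⟩

/-- Colourings differing only on one side of the bipartition. -/
theorem walk_side {V : Type*} [Fintype V] [DecidableEq V] (G : SimpleGraph V) (ℓ : ℕ)
    (f : G.Coloring (Fin 2)) (i : Fin 2) (c c' : G.Coloring (Fin ℓ))
    (h : ∀ v, f v ≠ i → c v = c' v) :
    ∃ p : (recolGraph G ℓ).Walk c c', p.length ≤ (Finset.univ.filter fun v => f v = i).card := by
  obtain ⟨p, hp⟩ := walk_of_diff G ℓ _ c c' rfl (by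
    intro a b hab
    have h1 := f.valid hab
    have h2 := h a
    have h3 := h b
    grind)
  refine ⟨p, hp ▸ Finset.card_le_card ?_⟩
  intro v hv
  simp only [Finset.mem_filter, Finset.mem_univ, true_and] at hv ⊢
  by_contra hne
  exact hv (h v hne)

theorem exists_dominating {V : Type*} [Fintype V] (G : SimpleGraph V)
    (hG : TwoK2Free G) (f : G.Coloring (Fin 2)) (v : V) (hv : f v = 0) :
    ∃ a₀, f a₀ = 0 ∧ ∀ a b, f a = 0 → G.Adj a b → G.Adj a₀ b := by
  classical
  obtain ⟨a₀, h0, hmax⟩ := Finset.exists_max_image (Finset.univ.filter fun v => f v = 0)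
    (fun v => G.degree v) ⟨v, by simpa using hv⟩
  simp only [Finset.mem_filter, Finset.mem_univ, true_and] at h0 hmax
  refine ⟨a₀, h0, fun a b ha hab => ?_⟩
  by_contra hnb
  have hle := hmax a ha
  obtain ⟨b', hb', hnb'⟩ : ∃ b', G.Adj a₀ b' ∧ ¬ G.Adj a b' := by
    by_contra hcon
    push Not at hcon
    have : G.neighborFinset a₀ ⊂ G.neighborFinset a := by
      rw [Finset.ssubset_iff_of_subset (fun w hw => by
        simp only [SimpleGraph.mem_neighborFinset] at hw ⊢; exact hcon w hw)]
      exact ⟨b, by simpa using hab, by simpa using hnb⟩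
    have := Finset.card_lt_card this
    simp only [SimpleGraph.card_neighborFinset_eq_degree] at this
    omega
  refine hG ⟨a₀, b', a, b, hb', hab, ?_, hnb, fun h => hnb' h.symm, ?_⟩
  · intro h; exact f.valid h (h0.trans ha.symm)
  · intro h
    have h1 := f.valid h
    have h2 := f.valid hb'
    have h3 := f.valid hab
    omega

/-- every 2K₂-free bipartite graph is recolourable, with ℓ-recolouring
diameter at most `4n` for every `ℓ ≥ χ(G) + 1`. -/
theorem stmt1 {V : Type*} [Fintype V] (G : SimpleGraph V)
    (hG : TwoK2Free G) (hbip : G.Colorable 2) :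
    ∀ ℓ : ℕ, G.chromaticNumber + 1 ≤ (ℓ : ℕ∞) →
      (recolGraph G ℓ).Connected ∧
      ∀ c₁ c₂ : G.Coloring (Fin ℓ),
        ∃ p : (recolGraph G ℓ).Walk c₁ c₂, p.length ≤ 4 * Fintype.card V := by
  classical
  intro ℓ hℓ
  have key : ∀ c₁ c₂ : G.Coloring (Fin ℓ),
        ∃ p : (recolGraph G ℓ).Walk c₁ c₂, p.length ≤ 4 * Fintype.card V := by
    intro c₁ c₂
    by_cases hE : ∃ a b, G.Adj a b
    · obtain ⟨a, b, hab⟩ := hE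
      obtain ⟨f⟩ := hbip
      have h3 : 3 ≤ ℓ := by
        have h2 : 2 ≤ G.chromaticNumber := SimpleGraph.two_le_chromaticNumber_of_adj hab
        have : (2 : ℕ∞) + 1 ≤ ℓ := le_trans (by gcongr) hℓ
        exact_mod_cast this
      obtain ⟨v, hv⟩ : ∃ v, f v = 0 := by
        by_cases h : f a = 0
        · exact ⟨a, h⟩
        · have := f.valid hab
          exact ⟨b, by omega⟩
      obtain ⟨a₀, h0, hdom⟩ := exists_dominating G hG f v hv
      obtain ⟨y, hy1, hy2⟩ : ∃ y : Fin ℓ, y ≠ c₁ a₀ ∧ y ≠ c₂ a₀ := by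
        have : ({c₁ a₀, c₂ a₀} : Finset (Fin ℓ)).card < (Finset.univ : Finset (Fin ℓ)).card := by
          have := Finset.card_le_two (a := c₁ a₀) (b := c₂ a₀)
          simp only [Finset.card_univ, Fintype.card_fin]
          omega
        obtain ⟨y, -, hy⟩ := Finset.exists_mem_notMem_of_card_lt_card this
        simp only [Finset.mem_insert, Finset.mem_singleton, not_or] at hy
        exact ⟨y, hy⟩
      let K : (x : Fin ℓ) → y ≠ x → G.Coloring (Fin ℓ) := fun x hx =>
        SimpleGraph.Coloring.mk (fun v => if f v = 0 then x else y) (by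
          intro a b hab
          have := f.valid hab
          by_cases ha : f a = 0 <;> by_cases hb : f b = 0 <;> simp only [ha, hb, if_true, if_false] <;>
            first | omega | exact hx | exact hx.symm)
      have hK : ∀ x hx v, K x hx v = if f v = 0 then x else y := fun _ _ _ => rfl
      let A := (Finset.univ.filter fun v => f v = 0).card
      let B := (Finset.univ.filter fun v => f v = 1).card
      have hAB : A + B = Fintype.card V := by
        have := Finset.card_filter_add_card_filter_not (s := (Finset.univ : Finset V)) (fun v => f v = 0)
        rw [Finset.card_univ] at this
        rw [← this]
        simp only [A, B]
        congr 2
        ext v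
        simp only [Finset.mem_filter, Finset.mem_univ, true_and]
        omega
      have toK : ∀ (c : G.Coloring (Fin ℓ)) (hx : y ≠ c a₀),
          ∃ p : (recolGraph G ℓ).Walk c (K (c a₀) hx), p.length ≤ A + B := by
        intro c hx
        let m : G.Coloring (Fin ℓ) :=
          SimpleGraph.Coloring.mk (fun v => if f v = 0 then c a₀ else c v) (by
            intro a b hab
            have h1 := f.valid hab
            have h2 := c.valid hab
            by_cases ha : f a = 0 <;> by_cases hb : f b = 0 <;>
              simp only [ha, hb, if_true, if_false]
            · omega
            · exact c.valid (hdom a b ha hab)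
            · exact (c.valid (hdom b a hb hab.symm)).symm
            · exact h2)
        have hm : ∀ v, m v = if f v = 0 then c a₀ else c v := fun _ => rfl
        obtain ⟨p, hp⟩ := walk_side G ℓ f 0 c m (by intro v hv; simp [hm, hv])
        obtain ⟨q, hq⟩ := walk_side G ℓ f 1 m (K (c a₀) hx) (by
          intro v hv
          have : f v = 0 := by omega
          simp [hm, hK, this])
        exact ⟨p.append q, by rw [SimpleGraph.Walk.length_append]; exact add_le_add hp hq⟩
      obtain ⟨p, hp⟩ := toK c₁ hy1
      obtain ⟨q, hq⟩ := toK c₂ hy2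
      obtain ⟨r, hr⟩ := walk_side G ℓ f 0 (K _ hy1) (K _ hy2) (by
        intro v hv; simp [hK, hv])
      refine ⟨(p.append r).append q.reverse, ?_⟩
      have hr' : r.length ≤ A := hr
      simp only [SimpleGraph.Walk.length_append, SimpleGraph.Walk.length_reverse]
      omega
    · push Not at hE
      obtain ⟨p, hp⟩ := walk_of_diff G ℓ _ c₁ c₂ rfl (fun u v h => (hE u v h).elim)
      refine ⟨p, ?_⟩
      have := Finset.card_le_univ (Finset.univ.filter fun v => c₁ v ≠ c₂ v)
      omega
  refine ⟨?_, key⟩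
  have hcol : G.Colorable ℓ :=
    SimpleGraph.chromaticNumber_le_iff_colorable.1 (le_trans le_self_add hℓ)
  haveI : Nonempty (G.Coloring (Fin ℓ)) := hcol
  exact ⟨fun c₁ c₂ => (key c₁ c₂).elim fun p _ => ⟨p⟩⟩
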